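/- Let m and δ be positive integers with d = δ mod 2m satisfying d ≤ m, let S = {m, m+δ, 2m+δ}, and let a = (δ − d)/(2m) + 1 (note that 2m divides δ − d). Then for all integers j and r with 0 ≤ j < 2(a−1) and 1 ≤ r ≤ m, v_S(3m + δ + j·m + r) = 3 if j is even and v_S(3m + δ + j·m + r) = 0 if j is odd. (This is the trailing factor (3^m 0^m)^(a−1) of the period, ending at position 3m + 2δ − d.) -/

import Mathlib

/-- The minimum excludant of a finite set of naturals. -/
noncomputable def mex (A : Finset ℕ) : ℕ := sInf {n : ℕ | n ∉ A}

/-- The sink-subtraction nim-value function: `sinkVal S 0 = 0`, and for `x ≥ 1`,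
`sinkVal S x = mex { sinkVal S (x ∸ s) : s ∈ S }` (when every `s ∈ S` is positive,
since `(x+1) - s = x - (s-1)` in truncated subtraction). -/
noncomputable def sinkVal (S : Finset ℕ) : ℕ → ℕ
  | 0 => 0
  | x + 1 => mex (S.image fun s => sinkVal S (x - (s - 1)))
termination_by x => x
decreasing_by omega

theorem mex_eq_of (A : Finset ℕ) (n : ℕ) (h : n ∉ A) (h2 : ∀ k < n, k ∈ A) : mex A = n := by
  unfold mex
  apply le_antisymm
  · exact Nat.sInf_le h
  · refine le_csInf ⟨n, h⟩ ?_
    intro b hb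
    by_contra hlt
    exact hb (h2 b (by omega))

theorem sinkVal_zero' (S : Finset ℕ) : sinkVal S 0 = 0 := by
  rw [sinkVal]

theorem sinkVal_three (m δ : ℕ) (hm : 0 < m) (x : ℕ) (hx : 0 < x) :
    sinkVal {m, m + δ, 2 * m + δ} x =
      mex {sinkVal {m, m + δ, 2 * m + δ} (x - m), sinkVal {m, m + δ, 2 * m + δ} (x - (m + δ)),
        sinkVal {m, m + δ, 2 * m + δ} (x - (2 * m + δ))} := by
  obtain ⟨y, rfl⟩ : ∃ y, x = y + 1 := ⟨x - 1, by omega⟩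
  rw [sinkVal]
  simp only [Finset.image_insert, Finset.image_singleton]
  rw [show y - (m - 1) = y + 1 - m by omega, show y - (m + δ - 1) = y + 1 - (m + δ) by omega,
    show y - (2 * m + δ - 1) = y + 1 - (2 * m + δ) by omega]

/-- Recursion step in relational form. -/
theorem sinkVal_step (m δ : ℕ) (hm : 0 < m) (x n p q r : ℕ) (hx : 0 < x)
    (hp : sinkVal {m, m + δ, 2 * m + δ} (x - m) = p)
    (hq : sinkVal {m, m + δ, 2 * m + δ} (x - (m + δ)) = q)
    (hr : sinkVal {m, m + δ, 2 * m + δ} (x - (2 * m + δ)) = r)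
    (h : n ≠ p ∧ n ≠ q ∧ n ≠ r) (h2 : ∀ k < n, k = p ∨ k = q ∨ k = r) :
    sinkVal {m, m + δ, 2 * m + δ} x = n := by
  rw [sinkVal_three m δ hm x hx, hp, hq, hr]
  apply mex_eq_of
  · simpa using h
  · intro k hk
    simpa using h2 k hk

theorem phase1 (m k d : ℕ) (v : ℕ → ℕ) (hm : 0 < m) (hdm : d ≤ m) (v0 : v 0 = 0)
  (step : ∀ x n p q r : ℕ, 0 < x → v (x - m) = p → v (x - (m + (2 * (k * m) + d))) = q →
    v (x - (2 * m + (2 * (k * m) + d))) = r → (n ≠ p ∧ n ≠ q ∧ n ≠ r) →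
    (∀ i < n, i = p ∨ i = q ∨ i = r) → v x = n)
    (q r : ℕ) (hq : q < 2 * (k + 1)) (hr : 1 ≤ r) (hrm : r ≤ m) :
    v (q * m + r) = if q % 2 = 0 then 1 else 2 := by
  have base : ∀ r, 1 ≤ r → r ≤ m → v r = 1 := by
    intro r hr hrm
    refine step r 1 0 0 0 hr ?_ ?_ ?_ (by omega) (by omega)
    · rw [show r - m = 0 by omega, v0]
    · rw [show r - (m + (2 * (k * m) + d)) = 0 by omega, v0]
    · rw [show r - (2 * m + (2 * (k * m) + d)) = 0 by omega, v0]
  induction q with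
  | zero => simpa using base r hr hrm
  | succ q ih =>
    have ih := ih (by omega)
    have e : (q + 1) * m = q * m + m := by ring
    have e1 : v ((q + 1) * m + r - m) = if q % 2 = 0 then 1 else 2 := by
      rw [show (q + 1) * m + r - m = q * m + r by omega, ih]
    have le2 : q * m ≤ 2 * (k * m) := by
      calc q * m ≤ (2 * k) * m := Nat.mul_le_mul_right m (by omega)
        _ = _ := by ring
    have e3 : v ((q + 1) * m + r - (2 * m + (2 * (k * m) + d))) = 0 := by
      rw [show (q + 1) * m + r - (2 * m + (2 * (k * m) + d)) = 0 by omega, v0]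
    by_cases hc : q = 2 * k
    · have hqm : q * m = 2 * (k * m) := by rw [hc]; ring
      have hx : (q + 1) * m + r - (m + (2 * (k * m) + d)) = r - d := by omega
      rw [if_neg (by omega)]
      rw [if_pos (by omega)] at e1
      by_cases hrd : r ≤ d
      · have e2 : v ((q + 1) * m + r - (m + (2 * (k * m) + d))) = 0 := by
          rw [hx, show r - d = 0 by omega, v0]
        exact step _ 2 _ _ _ (by omega) e1 e2 e3 (by omega) (by omega)
      · have e2 : v ((q + 1) * m + r - (m + (2 * (k * m) + d))) = 1 := by
          rw [hx, base _ (by omega) (by omega)]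
        exact step _ 2 _ _ _ (by omega) e1 e2 e3 (by omega) (by omega)
    · have le3 : q * m + m ≤ 2 * (k * m) := by
        calc q * m + m = (q + 1) * m := by ring
          _ ≤ (2 * k) * m := Nat.mul_le_mul_right m (by omega)
          _ = _ := by ring
      have e2 : v ((q + 1) * m + r - (m + (2 * (k * m) + d))) = 0 := by
        rw [show (q + 1) * m + r - (m + (2 * (k * m) + d)) = 0 by omega, v0]
      refine step _ _ _ _ _ (by omega) e1 e2 e3 ?_ ?_ <;> split_ifs <;> omega

theorem phase2 (m k d : ℕ) (v : ℕ → ℕ) (hm : 0 < m) (hdm : d ≤ m) (v0 : v 0 = 0)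
  (step : ∀ x n p q r : ℕ, 0 < x → v (x - m) = p → v (x - (m + (2 * (k * m) + d))) = q →
    v (x - (2 * m + (2 * (k * m) + d))) = r → (n ≠ p ∧ n ≠ q ∧ n ≠ r) →
    (∀ i < n, i = p ∨ i = q ∨ i = r) → v x = n)
    (t : ℕ) (ht : 1 ≤ t) (htd : t ≤ d) : v (2 * m + 2 * (k * m) + t) = 3 := by
  have P := phase1 m k d v hm hdm v0 step
  have e1 := P (2 * k + 1) t (by omega) ht (by omega)
  have e2 := P 0 (m - d + t) (by omega) (by omega) (by omega)
  rw [if_neg (by omega)] at e1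
  rw [if_pos (by omega)] at e2
  have hh : (2 * k + 1) * m = 2 * (k * m) + m := by ring
  refine step _ 3 2 1 0 (by omega) ?_ ?_ ?_ (by omega) (by omega)
  · exact (congrArg v (by omega)).trans e1
  · exact (congrArg v (by omega)).trans e2
  · exact (congrArg v (by omega)).trans v0

theorem pos12 (m k d : ℕ) (v : ℕ → ℕ) (hm : 0 < m) (hdm : d ≤ m) (v0 : v 0 = 0)
  (step : ∀ x n p q r : ℕ, 0 < x → v (x - m) = p → v (x - (m + (2 * (k * m) + d))) = q →
    v (x - (2 * m + (2 * (k * m) + d))) = r → (n ≠ p ∧ n ≠ q ∧ n ≠ r) →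
    (∀ i < n, i = p ∨ i = q ∨ i = r) → v x = n)
    (x : ℕ) (hx : 1 ≤ x) (hx2 : x ≤ 2 * m + 2 * (k * m) + d) : v x ≠ 0 := by
  by_cases h : x ≤ 2 * m + 2 * (k * m)
  · have hq : (x - 1) / m < 2 * (k + 1) := by
      rw [Nat.div_lt_iff_lt_mul hm]
      have : 2 * (k + 1) * m = 2 * m + 2 * (k * m) := by ring
      omega
    have e := phase1 m k d v hm hdm v0 step ((x - 1) / m) ((x - 1) % m + 1) hq (by omega)
      (Nat.mod_lt _ hm)
    have := Nat.div_add_mod' (x - 1) m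
    rw [show (x - 1) / m * m + ((x - 1) % m + 1) = x by omega] at e
    rw [e]; split_ifs <;> omega
  · have e := phase2 m k d v hm hdm v0 step (x - (2 * m + 2 * (k * m))) (by omega) (by omega)
    rw [show 2 * m + 2 * (k * m) + (x - (2 * m + 2 * (k * m))) = x by omega] at e
    omega

theorem phase3 (m k d : ℕ) (v : ℕ → ℕ) (hm : 0 < m) (hdm : d ≤ m) (v0 : v 0 = 0)
  (step : ∀ x n p q r : ℕ, 0 < x → v (x - m) = p → v (x - (m + (2 * (k * m) + d))) = q →
    v (x - (2 * m + (2 * (k * m) + d))) = r → (n ≠ p ∧ n ≠ q ∧ n ≠ r) →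
    (∀ i < n, i = p ∨ i = q ∨ i = r) → v x = n)
    (r : ℕ) (hr : 1 ≤ r) (hrm : r ≤ m) : v (2 * m + (2 * (k * m) + d) + r) = 0 := by
  have P := pos12 m k d v hm hdm v0 step
  refine step _ 0 _ _ _ (by omega) rfl rfl rfl ⟨?_, ?_, ?_⟩ (by omega) <;>
    exact (P _ (by omega) (by omega)).symm

theorem phase4 (m k d : ℕ) (v : ℕ → ℕ) (hm : 0 < m) (hdm : d ≤ m) (v0 : v 0 = 0)
  (step : ∀ x n p q r : ℕ, 0 < x → v (x - m) = p → v (x - (m + (2 * (k * m) + d))) = q →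
    v (x - (2 * m + (2 * (k * m) + d))) = r → (n ≠ p ∧ n ≠ q ∧ n ≠ r) →
    (∀ i < n, i = p ∨ i = q ∨ i = r) → v x = n)
    (j r : ℕ) (hj : j < 2 * k) (hr : 1 ≤ r) (hrm : r ≤ m) :
    v (3 * m + (2 * (k * m) + d) + j * m + r) = if j % 2 = 0 then 3 else 0 := by
  have P := phase1 m k d v hm hdm v0 step
  have key : ∀ j, j < 2 * k → ∀ p, v (2 * m + (2 * (k * m) + d) + j * m + r) = p →
      p = (if j % 2 = 0 then 0 else 3) →
      v (3 * m + (2 * (k * m) + d) + j * m + r) = if j % 2 = 0 then 3 else 0 := by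
    intro j hj p e0 hp
    have e1 := P (j + 2) r (by omega) hr hrm
    have e2 := P (j + 1) r (by omega) hr hrm
    have h1 : (j + 2) * m = j * m + 2 * m := by ring
    have h2 : (j + 1) * m = j * m + m := by ring
    refine step _ _ p (if (j + 2) % 2 = 0 then 1 else 2) (if (j + 1) % 2 = 0 then 1 else 2)
      (by omega) ?_ ?_ ?_ ?_ ?_
    · exact (congrArg v (by omega)).trans e0
    · exact (congrArg v (by omega)).trans e1
    · exact (congrArg v (by omega)).trans e2
    · subst hp; split_ifs <;> omega
    · subst hp; split_ifs <;> omega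
  induction j with
  | zero =>
    refine key 0 hj 0 ?_ (by simp)
    exact (congrArg v (by omega)).trans (phase3 m k d v hm hdm v0 step r hr hrm)
  | succ j ih =>
    refine key (j + 1) hj _ ?_ rfl
    have h2 : (j + 1) * m = j * m + m := by ring
    rw [show 2 * m + (2 * (k * m) + d) + (j + 1) * m + r
      = 3 * m + (2 * (k * m) + d) + j * m + r by omega, ih (by omega)]
    split_ifs <;> omega

theorem stmt11 (m δ : ℕ) (hm : 0 < m) (hδ : 0 < δ)
    (S : Finset ℕ) (hS : S = {m, m + δ, 2 * m + δ})
    (d : ℕ) (hd : d = δ % (2 * m)) (hdm : d ≤ m)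
    (a : ℕ) (ha : a = (δ - d) / (2 * m) + 1) :
    ∀ j r : ℕ, j < 2 * (a - 1) → 1 ≤ r → r ≤ m →
      (Even j → sinkVal S (3 * m + δ + j * m + r) = 3) ∧
      (¬ Even j → sinkVal S (3 * m + δ + j * m + r) = 0) := by
  intro j r hj hr hrm
  obtain ⟨k, hk⟩ : ∃ k, k = δ / (2 * m) := ⟨_, rfl⟩
  have hdk : δ = 2 * (k * m) + d := by
    have := Nat.div_add_mod' δ (2 * m)
    rw [← hk, ← hd] at this
    rw [← this]; ring
  have hak : a - 1 = k := by
    rw [ha, show δ - d = k * (2 * m) by rw [hdk, Nat.add_sub_cancel]; ring,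
      Nat.mul_div_cancel _ (by omega)]
    rfl
  have e := phase4 m k d (sinkVal S) hm hdm (sinkVal_zero' S) (by
    subst hS
    rw [← hdk]
    exact fun x n p q r => sinkVal_step m δ hm x n p q r) j r (by omega) hr hrm
  rw [← hdk] at e
  rw [e, Nat.even_iff]
  exact ⟨fun h => if_pos h, fun h => if_neg h⟩
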